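/- Fix a positive rational number r and a constant c > 0, and for each sufficiently large odd integer s set B = B(s) = c·s^{1/2}/(log s)^{1/2} (so that s ≥ 10(2r+1)B² for s large) and let x₀ = x₀(s) be the unique positive real with f(x₀) = 1. Then lim_{s→∞, s odd} g(x₀)^{1/(s+1)} = exp(ζ(2)ζ(3)(2r+1)c²/(4ζ(6))) · r^{r}/(r+1)^{r+1}. -/

import Mathlib

/-!
Write `K = ζ(2)ζ(3)/ζ(6)`, `B = B(s)` and `N = |𝓕_B|`. Taking logarithms,
`log g(x₀) / (s+1)` is `(2r+1)/(s+1)` times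
`∑ φ(b) log b + ∑ φ(b) ∑_{p ∣ b} log p / (p-1) + N log den(r) + N log (x₀+2r+1)`
plus `r log (x₀+r) - (r+1) log (x₀+r+1)`, the sums being over `b` with `φ(b) ≤ B`.

The arithmetic input is `#{b : φ(b) ≤ m} ∼ K m` (`tendsto_card`). Let `U_y(n)` be the part of
`n / φ(n)` coming from primes `< y`. The condition `n ≤ m U_y(n)` depends on `n` and on finitely
many divisibility conditions, so the number of such `n` is asymptotic to `m` times the mean
`∏_{p < y} (1 + 1/(p(p-1)))` of `U_y`, and this product tends to `K` as `y → ∞` by the Euler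
product of `ζ`. These `n` all satisfy `φ(n) ≤ m`, which is the lower bound. For the upper bound, the
`n` with `φ(n) ≤ m` that are not counted with `l m` in place of `m` have either `n > M m`, which is
rare by a dyadic second moment estimate for `n / φ(n)` (`tail_bound`), or `n ≤ M m` and
`(n / φ(n)) / U_y(n) > l`, which is rare by Markov's inequality (`moment_one`).

Summation over `m` gives `N ∼ K B² / 2` (`tendsto_sum_totient`). Since
`∑_{p ∣ b} log p / (p-1) ≤ 2 √(log b)` (`h_le`), the second sum is `o(B² log B)`, and
`log b` may be replaced by `log B` in the first one, which is therefore `∼ (K/2) B² log B`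
(`tendsto_sL`). For `B = c √s / √(log s)` one has `B² log B ∼ (c²/2) s`; hence `N = o(s)`, the equation
`f(x₀) = 1` forces `x₀ → 0` (`root_bound`), and the limit is
`(2r+1) K c² / 4 + r log r - (r+1) log (r+1)`.
-/

open Finset Filter Real

noncomputable section

/-- The zero set `𝓕_B`: rationals `a/b` with `b ∈ Ψ`, `1 ≤ a ≤ b`, `gcd(a,b)=1`. -/
def zeroSet (Psi : Finset ℕ) : Finset ℚ :=
  Psi.biUnion fun b =>
    ((Finset.Icc 1 b).filter fun a => Nat.Coprime a b).image fun a : ℕ => (a : ℚ) / b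

/-- `P_{B,den(r)} = 2·den(r)·LCM{p−1 : p prime, p ∣ b for some b ∈ Ψ}`. -/
def Pconst (Psi : Finset ℕ) (r : ℚ) : ℕ :=
  2 * r.den * (Psi.biUnion Nat.primeFactors).lcm (fun p => p - 1)

/-- The major arithmetic factor `A₁(B) = ∏_{b ∈ Ψ} b^{(2r+1)φ(b)}`. -/
def A1 (Psi : Finset ℕ) (r : ℚ) : ℝ :=
  ∏ b ∈ Psi, (b : ℝ) ^ ((2 * (r : ℝ) + 1) * (Nat.totient b : ℝ))

/-- The minor arithmetic factor `A₂(B) = ∏_{b ∈ Ψ} ∏_{p ∣ b} p^{(2r+1)φ(b)/(p−1)}`. -/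
def A2 (Psi : Finset ℕ) (r : ℚ) : ℝ :=
  ∏ b ∈ Psi, ∏ p ∈ b.primeFactors,
    (p : ℝ) ^ ((2 * (r : ℝ) + 1) * (Nat.totient b : ℝ) / ((p : ℝ) - 1))

/-- The auxiliary rational function
`R_n(t) = A₁ⁿA₂ⁿ · (n!^{s+1}/((n/den(r))!)^{den(r)(2r+1)|𝓕_B|}) · (t−rn)·
∏_{θ∈𝓕_B}∏_{j=0}^{(2r+1)n−1}(t−rn+j+θ) / ∏_{j=0}^{n}(t+j)^{s+1}`.  Here, assuming
`P_{B,den(r)} ∣ n`, `(2r+1)n = 2·num(r)·(n/den(r)) + n` and `den(r)(2r+1) = 2·num(r)+den(r)`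
are the indicated natural numbers (the divisions are exact). -/
def Rfun (Psi : Finset ℕ) (r : ℚ) (s n : ℕ) (t : ℝ) : ℝ :=
  A1 Psi r ^ n * A2 Psi r ^ n *
    ((n.factorial : ℝ) ^ (s + 1) /
      (((n / r.den).factorial : ℝ)) ^ ((2 * r.num.toNat + r.den) * (zeroSet Psi).card)) *
    ((t - (r : ℝ) * n) *
      ∏ θ ∈ zeroSet Psi, ∏ j ∈ Finset.range (2 * (r.num.toNat * (n / r.den)) + n),
        (t - (r : ℝ) * n + (j : ℝ) + (θ : ℝ))) /
    ∏ j ∈ Finset.range (n + 1), (t + (j : ℝ)) ^ (s + 1)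


/-- `f(X) = ((X+2r+1)/X)^{|𝓕_B|}·((X+r)/(X+r+1))^{s+1}`. -/
def ff (Psi : Finset ℕ) (r : ℚ) (s : ℕ) (X : ℝ) : ℝ :=
  ((X + 2 * (r : ℝ) + 1) / X) ^ ((zeroSet Psi).card) *
    ((X + (r : ℝ)) / (X + (r : ℝ) + 1)) ^ (s + 1)

/-- `g(X) = A₁(B)A₂(B)·den(r)^{(2r+1)|𝓕_B|}·(X+2r+1)^{(2r+1)|𝓕_B|}·
((X+r)^r/(X+r+1)^{r+1})^{s+1}`. -/
def gg (Psi : Finset ℕ) (r : ℚ) (s : ℕ) (X : ℝ) : ℝ :=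
  A1 Psi r * A2 Psi r *
    (r.den : ℝ) ^ ((2 * (r : ℝ) + 1) * ((zeroSet Psi).card : ℝ)) *
    (X + 2 * (r : ℝ) + 1) ^ ((2 * (r : ℝ) + 1) * ((zeroSet Psi).card : ℝ)) *
    ((X + (r : ℝ)) ^ (r : ℝ) / (X + (r : ℝ) + 1) ^ ((r : ℝ) + 1)) ^ (s + 1)

/-- The real value of the Riemann zeta function at a natural number argument. -/
def zetaR (k : ℕ) : ℝ := (riemannZeta k).re

namespace GGRoot

/-! ### Mean values of multiplicative functions supported on finitely many primes -/

/-- Exact count behind the mean values: expanding a product over a finite set of primes of factors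
`a p + b p · 1[p ∣ n]` and summing over `1 ≤ n ≤ z` leaves counts of multiples. -/
lemma sum_prod_ind (Q : Finset ℕ) (hQ : ∀ p ∈ Q, p.Prime) (a b : ℕ → ℝ) (z : ℕ) :
    ∑ n ∈ Ioc 0 z, ∏ p ∈ Q, (b p * (if p ∣ n then 1 else 0) + a p) =
      ∑ S ∈ Q.powerset, (∏ p ∈ S, b p) * (∏ p ∈ Q \ S, a p) * ((z / ∏ p ∈ S, p : ℕ) : ℝ) := by
  simp_rw [Finset.prod_add]
  rw [Finset.sum_comm]
  refine Finset.sum_congr rfl fun S hS => ?_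
  have hSQ := Finset.mem_powerset.1 hS
  have key : ∀ n : ℕ, ∏ p ∈ S, (if p ∣ n then (1 : ℝ) else 0) =
      if (∏ p ∈ S, p) ∣ n then 1 else 0 := by
    intro n
    by_cases h : (∏ p ∈ S, p) ∣ n
    · rw [if_pos h]
      exact Finset.prod_eq_one fun p hp => if_pos ((Finset.dvd_prod_of_mem _ hp).trans h)
    · rw [if_neg h]
      have : ∃ p ∈ S, ¬ p ∣ n := by
        by_contra! hc
        exact h (Finset.prod_primes_dvd n (fun p hp => (hQ p (hSQ hp)).prime) hc)
      obtain ⟨p, hp, hpn⟩ := this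
      exact Finset.prod_eq_zero hp (if_neg hpn)
  simp_rw [Finset.prod_mul_distrib, key]
  rw [← Nat.Ioc_filter_dvd_card_eq_div, Finset.card_filter]
  push_cast
  rw [Finset.mul_sum]
  refine Finset.sum_congr rfl fun n _ => ?_
  ring

lemma tendsto_div_div (d : ℕ) :
    Tendsto (fun z : ℕ => ((z / d : ℕ) : ℝ) / z) atTop (nhds (1 / (d : ℝ))) := by
  have h := (tendsto_nat_floor_mul_div_atTop (R := ℝ) (a := 1 / (d : ℝ)) (by positivity)).comp
    (tendsto_natCast_atTop_atTop (R := ℝ))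
  refine h.congr fun z => ?_
  simp only [Function.comp]
  rw [← Nat.floor_div_eq_div (K := ℝ), one_div_mul_eq_div]

lemma tendsto_mean (Q : Finset ℕ) (hQ : ∀ p ∈ Q, p.Prime) (a b : ℕ → ℝ) :
    Tendsto (fun z : ℕ => (∑ n ∈ Ioc 0 z, ∏ p ∈ Q, (b p * (if p ∣ n then 1 else 0) + a p)) / z)
      atTop (nhds (∏ p ∈ Q, (b p / p + a p))) := by
  simp_rw [sum_prod_ind Q hQ, Finset.prod_add, Finset.sum_div]
  refine tendsto_finsetSum _ fun S _ => ?_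
  have h := (tendsto_div_div (∏ p ∈ S, p)).const_mul ((∏ p ∈ S, b p) * (∏ p ∈ Q \ S, a p))
  have e : (∏ p ∈ S, b p / p) * (∏ p ∈ Q \ S, a p) =
      (∏ p ∈ S, b p) * (∏ p ∈ Q \ S, a p) * (1 / ((∏ p ∈ S, p : ℕ) : ℝ)) := by
    rw [Finset.prod_div_distrib]; push_cast; ring
  rw [e]
  exact h.congr fun z => by ring

lemma mean_le (Q : Finset ℕ) (hQ : ∀ p ∈ Q, p.Prime) (b : ℕ → ℝ) (hb : ∀ p ∈ Q, 0 ≤ b p)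
    (z : ℕ) :
    ∑ n ∈ Ioc 0 z, ∏ p ∈ Q, (b p * (if p ∣ n then 1 else 0) + 1) ≤
      z * ∏ p ∈ Q, (b p / p + 1) := by
  rw [sum_prod_ind Q hQ, Finset.prod_add, Finset.mul_sum]
  refine Finset.sum_le_sum fun S hS => ?_
  have hS0 : 0 ≤ ∏ p ∈ S, b p :=
    Finset.prod_nonneg fun p hp => hb p (Finset.mem_powerset.1 hS hp)
  simp only [Finset.prod_const_one, mul_one]
  rw [Finset.prod_div_distrib, ← Nat.cast_prod]
  have : ((z / ∏ p ∈ S, p : ℕ) : ℝ) ≤ (z : ℝ) / ((∏ p ∈ S, p : ℕ) : ℝ) := Nat.cast_div_le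
  calc _ ≤ (∏ p ∈ S, b p) * ((z : ℝ) / ((∏ p ∈ S, p : ℕ) : ℝ)) := by gcongr
    _ = _ := by ring

/-! ### The Euler product of `n / φ(n)` -/

/-- The Euler factor `p / (p - 1) = 1 + 1 / (p - 1)` of `n / φ(n)`. -/
def w (p : ℕ) : ℝ := 1 / ((p : ℝ) - 1) + 1

/-- The part of `n / φ(n)` coming from the primes in `Q`. -/
def U (Q : Finset ℕ) (n : ℕ) : ℝ := ∏ p ∈ Q, (1 / ((p : ℝ) - 1) * (if p ∣ n then 1 else 0) + 1)

/-- The mean value of `U Q`; for `Q` the set of all primes this is `ζ(2)ζ(3)/ζ(6)`. -/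
def KQ (Q : Finset ℕ) : ℝ := ∏ p ∈ Q, (1 / ((p : ℝ) - 1) / p + 1)

lemma prime_sub_pos {p : ℕ} (hp : p.Prime) : (1 : ℝ) ≤ (p : ℝ) - 1 := by
  have : (2 : ℝ) ≤ p := by exact_mod_cast hp.two_le
  linarith

lemma U_factor {p : ℕ} (n : ℕ) : 1 / ((p : ℝ) - 1) * (if p ∣ n then 1 else 0) + 1 =
    if p ∣ n then w p else 1 := by
  unfold w; split_ifs <;> simp

lemma U_eq (Q : Finset ℕ) (n : ℕ) : U Q n = ∏ p ∈ Q.filter (· ∣ n), w p := by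
  unfold U; simp_rw [U_factor]; rw [Finset.prod_filter]

lemma one_le_w {p : ℕ} (hp : p.Prime) : 1 ≤ w p := by
  have := prime_sub_pos hp
  have : (0 : ℝ) ≤ 1 / ((p : ℝ) - 1) := by positivity
  unfold w; linarith

lemma one_le_U (Q : Finset ℕ) (hQ : ∀ p ∈ Q, p.Prime) (n : ℕ) : 1 ≤ U Q n := by
  rw [U_eq]
  exact Finset.one_le_prod fun p hp => one_le_w (hQ p (Finset.mem_filter.1 hp).1)

lemma one_le_KQ (Q : Finset ℕ) (hQ : ∀ p ∈ Q, p.Prime) : 1 ≤ KQ Q := by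
  unfold KQ
  refine Finset.one_le_prod fun p hp => ?_
  have := prime_sub_pos (hQ p hp)
  have : (0 : ℝ) ≤ 1 / ((p : ℝ) - 1) / p := by positivity
  linarith

/-- The product over all prime divisors recovers `n / φ(n)`. -/
lemma totient_mul_U (n : ℕ) (Q : Finset ℕ) (hQ : ∀ p ∈ Q, p.Prime)
    (hn : 0 < n) (hall : n.primeFactors ⊆ Q) : (n.totient : ℝ) * U Q n = n := by
  have hf : Q.filter (· ∣ n) = n.primeFactors := by
    ext p
    simp only [Finset.mem_filter, Nat.mem_primeFactors]
    constructor
    · rintro ⟨h1, h2⟩; exact ⟨hQ p h1, h2, hn.ne'⟩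
    · rintro ⟨h1, h2, h3⟩; exact ⟨hall (Nat.mem_primeFactors.2 ⟨h1, h2, h3⟩), h2⟩
  rw [U_eq, hf]
  have h := Nat.totient_eq_mul_prod_factors n
  have h' : (n.totient : ℝ) = n * ∏ p ∈ n.primeFactors, (1 - (p : ℝ)⁻¹) := by
    have h2 := congrArg (Rat.cast : ℚ → ℝ) h
    push_cast at h2
    exact h2
  rw [h', mul_assoc, ← Finset.prod_mul_distrib]
  rw [Finset.prod_eq_one, mul_one]
  intro p hp
  have h1 := prime_sub_pos (Nat.prime_of_mem_primeFactors hp)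
  have h2 : (p : ℝ) - 1 ≠ 0 := by linarith
  have h3 : (p : ℝ) ≠ 0 := by linarith
  unfold w
  field_simp
  ring

lemma totient_mul_U_le (n : ℕ) (Q : Finset ℕ) (hQ : ∀ p ∈ Q, p.Prime)
    (hn : 0 < n) : (n.totient : ℝ) * U Q n ≤ n := by
  have hQ' : ∀ p ∈ Q ∪ n.primeFactors, p.Prime := by
    intro p hp
    rcases Finset.mem_union.1 hp with h | h
    · exact hQ p h
    · exact Nat.prime_of_mem_primeFactors h
  rw [← totient_mul_U n (Q ∪ n.primeFactors) hQ' hn Finset.subset_union_right]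
  refine mul_le_mul_of_nonneg_left ?_ (by positivity)
  rw [U_eq, U_eq]
  refine Finset.prod_le_prod_of_subset_of_one_le
    (Finset.filter_subset_filter _ Finset.subset_union_left) (fun p hp => ?_) fun p hp _ => ?_
  · exact zero_le_one.trans (one_le_w (hQ p (Finset.mem_filter.1 hp).1))
  · exact one_le_w (hQ' p (Finset.mem_filter.1 hp).1)

/-! ### Counting `n ≤ x · U Q n` for a finite set of primes `Q` -/

/-- Number of `n ≤ z` whose set of prime divisors inside `Q` is exactly `T`. -/
def cnt (Q T : Finset ℕ) (z : ℕ) : ℕ := ((Ioc 0 z).filter fun n => Q.filter (· ∣ n) = T).card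

/-- Number of `n ≥ 1` with `n ≤ x · U Q n`, organised by the value of `Q.filter (· ∣ n)`. -/
def trunc (Q : Finset ℕ) (x : ℝ) : ℕ := ∑ T ∈ Q.powerset, cnt Q T ⌊x * ∏ p ∈ T, w p⌋₊

lemma tendsto_cnt (Q T : Finset ℕ) (hQ : ∀ p ∈ Q, p.Prime) (hT : T ⊆ Q) :
    Tendsto (fun z : ℕ => (cnt Q T z : ℝ) / z) atTop
      (nhds ((∏ p ∈ T, 1 / (p : ℝ)) * ∏ p ∈ Q \ T, (1 - 1 / (p : ℝ)))) := by
  -- the indicator of `Q.filter (· ∣ n) = T` is a product of affine functions of `1[p ∣ n]`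
  have h := tendsto_mean Q hQ (fun p => if p ∈ T then 0 else 1) (fun p => if p ∈ T then 1 else -1)
  have e1 : ∏ p ∈ Q, ((if p ∈ T then (1 : ℝ) else -1) / p + (if p ∈ T then 0 else 1)) =
      (∏ p ∈ T, 1 / (p : ℝ)) * ∏ p ∈ Q \ T, (1 - 1 / (p : ℝ)) := by
    rw [← Finset.prod_sdiff hT, mul_comm]
    congr 1
    · exact Finset.prod_congr rfl fun p hp => by simp [hp]
    · refine Finset.prod_congr rfl fun p hp => ?_
      have := (Finset.mem_sdiff.1 hp).2
      simp only [this, if_false]; ring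
  rw [e1] at h
  refine h.congr fun z => ?_
  congr 1
  unfold cnt
  rw [Finset.card_filter]
  push_cast
  refine Finset.sum_congr rfl fun n _ => ?_
  by_cases hn : Q.filter (· ∣ n) = T
  · rw [if_pos hn]
    refine Finset.prod_eq_one fun p hp => ?_
    by_cases hpT : p ∈ T
    · have : p ∣ n := by rw [← hn] at hpT; exact (Finset.mem_filter.1 hpT).2
      simp [hpT, this]
    · have : ¬ p ∣ n := fun hd => hpT (by rw [← hn]; exact Finset.mem_filter.2 ⟨hp, hd⟩)
      simp [hpT, this]
  · rw [if_neg hn]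
    have : ∃ p ∈ Q, ¬ (p ∣ n ↔ p ∈ T) := by
      by_contra! hc
      apply hn
      ext p
      rw [Finset.mem_filter]
      exact ⟨fun ⟨h1, h2⟩ => (hc p h1).1 h2, fun h1 => ⟨hT h1, (hc p (hT h1)).2 h1⟩⟩
    obtain ⟨p, hp, hne⟩ := this
    refine Finset.prod_eq_zero hp ?_
    by_cases h1 : p ∣ n <;> by_cases h2 : p ∈ T <;> simp_all

lemma tendsto_trunc (Q : Finset ℕ) (hQ : ∀ p ∈ Q, p.Prime) (l : ℝ) (hl : 0 < l) :
    Tendsto (fun m : ℕ => (trunc Q (l * m) : ℝ) / m) atTop (nhds (l * KQ Q)) := by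
  have e : l * KQ Q = ∑ T ∈ Q.powerset, (l * ∏ p ∈ T, w p) *
      ((∏ p ∈ T, 1 / (p : ℝ)) * ∏ p ∈ Q \ T, (1 - 1 / (p : ℝ))) := by
    have : KQ Q = ∏ p ∈ Q, (w p * (1 / (p : ℝ)) + (1 - 1 / (p : ℝ))) := by
      unfold KQ w
      refine Finset.prod_congr rfl fun p hp => ?_
      ring
    rw [this, Finset.prod_add, Finset.mul_sum]
    refine Finset.sum_congr rfl fun T _ => ?_
    rw [Finset.prod_mul_distrib]; ring
  rw [e]
  unfold trunc
  push_cast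
  simp_rw [Finset.sum_div]
  refine tendsto_finsetSum _ fun T hT => ?_
  have hTQ := Finset.mem_powerset.1 hT
  set W := ∏ p ∈ T, w p with hW
  have hW1 : 1 ≤ W := Finset.one_le_prod fun p hp => one_le_w (hQ p (hTQ hp))
  have hlW : 0 < l * W := by positivity
  have hfl : Tendsto (fun m : ℕ => ⌊l * m * W⌋₊) atTop atTop := by
    refine tendsto_nat_floor_atTop.comp ?_
    have := (tendsto_natCast_atTop_atTop (R := ℝ)).const_mul_atTop hlW
    exact this.congr fun m => by ring
  have h1 := (tendsto_cnt Q T hQ hTQ).comp hfl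
  have h2 : Tendsto (fun m : ℕ => (⌊l * m * W⌋₊ : ℝ) / m) atTop (nhds (l * W)) := by
    have := (tendsto_nat_floor_mul_div_atTop (R := ℝ) hlW.le).comp
      (tendsto_natCast_atTop_atTop (R := ℝ))
    refine this.congr fun m => ?_
    simp only [Function.comp]
    rw [mul_right_comm]
  refine (h2.mul h1).congr' ?_
  filter_upwards [hfl.eventually_gt_atTop 0] with m hm
  have : (⌊l * m * W⌋₊ : ℝ) ≠ 0 := by exact_mod_cast hm.ne'
  simp only [Function.comp]
  rw [div_mul_div_comm, mul_comm, mul_div_mul_right _ _ this]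

lemma card_le_trunc (Q : Finset ℕ) (x : ℝ) (E : Finset ℕ)
    (hE : ∀ n ∈ E, 0 < n ∧ (n : ℝ) ≤ x * U Q n) : E.card ≤ trunc Q x := by
  rw [Finset.card_eq_sum_card_fiberwise (f := fun n => Q.filter (· ∣ n)) (t := Q.powerset)
    (fun n _ => Finset.mem_coe.2 (Finset.mem_powerset.2 (Finset.filter_subset _ _)))]
  refine Finset.sum_le_sum fun T _ => Finset.card_le_card fun n hn => ?_
  obtain ⟨hn1, hn2⟩ := Finset.mem_filter.1 hn
  refine Finset.mem_filter.2 ⟨Finset.mem_Ioc.2 ⟨(hE n hn1).1, ?_⟩, hn2⟩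
  have := (hE n hn1).2
  rw [U_eq, hn2] at this
  exact Nat.le_floor this

lemma trunc_le_card (Q : Finset ℕ) (hQ : ∀ p ∈ Q, p.Prime) (x : ℝ) (hx : 0 ≤ x) (E : Finset ℕ)
    (hE : ∀ n : ℕ, 0 < n → (n : ℝ) ≤ x * U Q n → n ∈ E) : trunc Q x ≤ E.card := by
  rw [Finset.card_eq_sum_card_fiberwise (f := fun n => Q.filter (· ∣ n)) (t := Q.powerset)
    (s := E) (fun n _ => Finset.mem_coe.2 (Finset.mem_powerset.2 (Finset.filter_subset _ _)))]
  refine Finset.sum_le_sum fun T hT => Finset.card_le_card fun n hn => ?_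
  obtain ⟨hn1, hn2⟩ := Finset.mem_filter.1 hn
  obtain ⟨h0, hz⟩ := Finset.mem_Ioc.1 hn1
  refine Finset.mem_filter.2 ⟨hE n h0 ?_, hn2⟩
  rw [U_eq, hn2]
  refine (Nat.le_floor_iff ?_).1 hz
  exact mul_nonneg hx (Finset.prod_nonneg fun p hp =>
    zero_le_one.trans (one_le_w (hQ p (Finset.mem_powerset.1 hT hp))))

/-! ### The constant `ζ(2)ζ(3)/ζ(6)` and moments of `n / φ(n)` -/

/-- The density constant `ζ(2)ζ(3)/ζ(6)`. -/
def KK : ℝ := zetaR 2 * zetaR 3 / zetaR 6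

lemma tendsto_zetaR (k : ℕ) (hk : 1 < k) :
    Tendsto (fun n : ℕ => ∏ p ∈ n.primesBelow, (1 - ((p : ℝ) ^ k)⁻¹)⁻¹) atTop
      (nhds (zetaR k)) := by
  have h := riemannZeta_eulerProduct (s := (k : ℂ)) (by simpa using hk)
  have h2 := (Complex.continuous_re.tendsto _).comp h
  refine h2.congr fun n => ?_
  simp only [Function.comp]
  have : ∏ p ∈ n.primesBelow, (1 - (p : ℂ) ^ (-(k : ℂ)))⁻¹ =
      ((∏ p ∈ n.primesBelow, (1 - ((p : ℝ) ^ k)⁻¹)⁻¹ : ℝ) : ℂ) := by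
    push_cast
    refine Finset.prod_congr rfl fun p _ => ?_
    rw [Complex.cpow_neg, Complex.cpow_natCast]
  rw [this, Complex.ofReal_re]

lemma one_le_zetaR (k : ℕ) (hk : 1 < k) : 1 ≤ zetaR k := by
  refine ge_of_tendsto' (tendsto_zetaR k hk) fun n => Finset.one_le_prod fun p hp => ?_
  have h1 := prime_sub_pos (Nat.mem_primesBelow.1 hp).2
  have h2 : (1 : ℝ) < (p : ℝ) ^ k := one_lt_pow₀ (by linarith) (by omega)
  have h3 : ((p : ℝ) ^ k)⁻¹ < 1 := inv_lt_one_of_one_lt₀ h2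
  have h4 : 0 < ((p : ℝ) ^ k)⁻¹ := by positivity
  exact (one_le_inv₀ (by linarith)).2 (by linarith)

lemma tendsto_KQ : Tendsto (fun n : ℕ => KQ n.primesBelow) atTop (nhds KK) := by
  have h6 : zetaR 6 ≠ 0 := by have := one_le_zetaR 6 (by norm_num); linarith
  refine (((tendsto_zetaR 2 (by norm_num)).mul (tendsto_zetaR 3 (by norm_num))).div
    (tendsto_zetaR 6 (by norm_num)) h6).congr fun n => ?_
  simp only [Pi.div_apply]
  unfold KQ
  rw [← Finset.prod_mul_distrib, ← Finset.prod_div_distrib]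
  refine Finset.prod_congr rfl fun p hp => ?_
  have h1 := prime_sub_pos (Nat.mem_primesBelow.1 hp).2
  set q : ℝ := (p : ℝ)
  have hq : 2 ≤ q := by linarith
  have e1 : q - 1 ≠ 0 := by linarith
  have e0 : q ≠ 0 := by linarith
  have e2 : q ^ 2 - 1 ≠ 0 := by nlinarith
  have e3 : q ^ 3 - 1 ≠ 0 := by
    have := one_lt_pow₀ (show 1 < q by linarith) (show 3 ≠ 0 by norm_num); linarith
  have e6 : q ^ 6 - 1 ≠ 0 := by
    have := one_lt_pow₀ (show 1 < q by linarith) (show 6 ≠ 0 by norm_num); linarith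
  have f : ∀ k : ℕ, q ^ k - 1 ≠ 0 → (1 - (q ^ k)⁻¹)⁻¹ = q ^ k / (q ^ k - 1) := by
    intro k hk
    have : q ^ k ≠ 0 := pow_ne_zero _ e0
    rw [show 1 - (q ^ k)⁻¹ = (q ^ k - 1) / q ^ k by field_simp, inv_div]
  rw [f 2 e2, f 3 e3, f 6 e6]
  field_simp
  ring

lemma KQ_mono {Q Q' : Finset ℕ} (hQ' : ∀ p ∈ Q', p.Prime) (h : Q ⊆ Q') : KQ Q ≤ KQ Q' := by
  unfold KQ
  have h1 : ∀ p ∈ Q', (0 : ℝ) ≤ 1 / ((p : ℝ) - 1) / p := fun p hp => by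
    have := prime_sub_pos (hQ' p hp)
    positivity
  exact Finset.prod_le_prod_of_subset_of_one_le h
    (fun p hp => by have := h1 p (h hp); linarith) fun p hp _ => by have := h1 p hp; linarith

lemma prime_pb {y : ℕ} : ∀ p ∈ y.primesBelow, p.Prime := fun _ hp => (Nat.mem_primesBelow.1 hp).2

lemma pb_mono {y z : ℕ} (h : y ≤ z) : y.primesBelow ⊆ z.primesBelow := fun p hp => by
  have := Nat.mem_primesBelow.1 hp
  exact Nat.mem_primesBelow.2 ⟨by omega, this.2⟩

lemma KQ_le (y : ℕ) : KQ y.primesBelow ≤ KK :=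
  Monotone.ge_of_tendsto (f := fun n : ℕ => KQ n.primesBelow)
    (fun _ _ h => KQ_mono prime_pb (pb_mono h)) tendsto_KQ y

lemma one_le_KK : 1 ≤ KK := (one_le_KQ _ prime_pb).trans (KQ_le 0)

lemma totient_mul_U_pb {n Y : ℕ} (hn : 0 < n) (hY : n < Y) :
    (n.totient : ℝ) * U Y.primesBelow n = n :=
  totient_mul_U n _ prime_pb hn fun _ hp => Nat.mem_primesBelow.2
    ⟨(Nat.le_of_mem_primeFactors hp).trans_lt hY, Nat.prime_of_mem_primeFactors hp⟩

lemma div_totient {n Y : ℕ} (hn : 0 < n) (hY : n < Y) :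
    (n : ℝ) / n.totient = U Y.primesBelow n := by
  have : (n.totient : ℝ) ≠ 0 := by exact_mod_cast (Nat.totient_pos.2 hn).ne'
  rw [div_eq_iff this, mul_comm, totient_mul_U_pb hn hY]

/-- First moment of the part of `n / φ(n)` coming from primes `≥ y`. -/
lemma moment_one (y z : ℕ) :
    ∑ n ∈ Ioc 0 z, (n : ℝ) / n.totient / U y.primesBelow n ≤ z * (KK / KQ y.primesBelow) := by
  set Y := max (z + 1) y with hY
  have hsub : y.primesBelow ⊆ Y.primesBelow := pb_mono (le_max_right _ _)
  set D := Y.primesBelow \ y.primesBelow with hD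
  have hDp : ∀ p ∈ D, p.Prime := fun p hp => prime_pb p (Finset.mem_sdiff.1 hp).1
  have hKpos : 0 < KQ y.primesBelow := zero_lt_one.trans_le (one_le_KQ _ prime_pb)
  have h1 : ∀ n ∈ Ioc 0 z, (n : ℝ) / n.totient / U y.primesBelow n = U D n := by
    intro n hn
    obtain ⟨h0, hz⟩ := Finset.mem_Ioc.1 hn
    have hUpos : 0 < U y.primesBelow n := zero_lt_one.trans_le (one_le_U _ prime_pb n)
    rw [div_totient (Y := Y) h0 (by omega), div_eq_iff hUpos.ne']
    unfold U
    rw [Finset.prod_sdiff hsub]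
  rw [Finset.sum_congr rfl h1]
  refine (mean_le D hDp _ (fun _ hp => ?_) z).trans ?_
  · have := prime_sub_pos (hDp _ hp); positivity
  · refine mul_le_mul_of_nonneg_left ?_ (by positivity)
    rw [le_div_iff₀ hKpos]
    unfold KQ
    rw [Finset.prod_sdiff hsub]
    exact KQ_le Y

/-- Second moment of `n / φ(n)`: the `p`-factor is at most the cube of that of the first moment. -/
lemma moment_two (z : ℕ) : ∑ n ∈ Ioc 0 z, ((n : ℝ) / n.totient) ^ 2 ≤ z * KK ^ 3 := by
  have h1 : ∀ n ∈ Ioc 0 z, ((n : ℝ) / n.totient) ^ 2 =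
      ∏ p ∈ (z + 1).primesBelow, ((w p ^ 2 - 1) * (if p ∣ n then 1 else 0) + 1) := by
    intro n hn
    obtain ⟨h0, hz⟩ := Finset.mem_Ioc.1 hn
    rw [div_totient (Y := z + 1) h0 (by omega)]
    unfold U
    rw [← Finset.prod_pow]
    refine Finset.prod_congr rfl fun p _ => ?_
    rw [U_factor]
    split_ifs <;> ring
  rw [Finset.sum_congr rfl h1]
  refine (mean_le _ prime_pb _ (fun p hp => ?_) z).trans ?_
  · have := one_le_w (prime_pb p hp); nlinarith
  · refine mul_le_mul_of_nonneg_left ?_ (by positivity)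
    refine le_trans ?_ (pow_le_pow_left₀ (by have := one_le_KQ _ (prime_pb (y := z + 1)); linarith)
      (KQ_le (z + 1)) 3)
    unfold KQ
    rw [← Finset.prod_pow]
    refine Finset.prod_le_prod (fun p hp => ?_) fun p hp => ?_
    · have := one_le_w (prime_pb p hp)
      have : 0 ≤ w p ^ 2 - 1 := by nlinarith
      positivity
    · have h1 := prime_sub_pos (prime_pb p hp)
      have h2 : (0 : ℝ) ≤ 1 / ((p : ℝ) - 1) / p := by positivity
      have h3 := one_add_mul_le_pow (a := 1 / ((p : ℝ) - 1) / p) (by linarith) 3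
      rw [add_comm (1 / ((p : ℝ) - 1) / p) 1]
      refine le_trans ?_ h3
      unfold w
      have e1 : (p : ℝ) - 1 ≠ 0 := by linarith
      have e0 : (p : ℝ) ≠ 0 := by linarith
      have : (1 / ((p : ℝ) - 1) + 1) ^ 2 - 1 = 1 / ((p : ℝ) - 1) * (1 / ((p : ℝ) - 1) + 2) := by
        ring
      have h4 : 1 / ((p : ℝ) - 1) ≤ 1 := by rw [div_le_one (by linarith)]; exact h1
      rw [this]
      have h5 : 1 / ((p : ℝ) - 1) * (1 / ((p : ℝ) - 1) + 2) / p =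
        (1 / ((p : ℝ) - 1) / p) * (1 / ((p : ℝ) - 1) + 2) := by ring
      rw [h5]
      push_cast
      nlinarith

/-- Integers `n > Z` with `φ(n) ≤ m` are rare: Chebyshev with the second moment on each dyadic
block `(2 ^ i * Z, 2 ^ (i + 1) * Z]`. -/
lemma tail_bound (m j : ℕ) : ∀ (Z : ℕ), 0 < Z → ∀ E : Finset ℕ,
    (∀ n ∈ E, Z < n ∧ n.totient ≤ m ∧ n ≤ 2 ^ j * Z) →
    (E.card : ℝ) ≤ 4 * KK ^ 3 * m ^ 2 / Z := by
  have hK := one_le_KK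
  induction j with
  | zero =>
    intro Z hZ E hE
    have : E = ∅ := Finset.eq_empty_of_forall_notMem fun n hn => by
      have := hE n hn; simp at this; omega
    rw [this]; simp; positivity
  | succ j ih =>
    intro Z hZ E hE
    have hZ' : (0 : ℝ) < Z := by exact_mod_cast hZ
    have hsplit := Finset.card_filter_add_card_filter_not (s := E) (fun n => n ≤ 2 * Z)
    have h2 := ih (2 * Z) (by omega) (E.filter fun n => ¬ n ≤ 2 * Z) (fun n hn => by
      obtain ⟨hn1, hn2⟩ := Finset.mem_filter.1 hn
      have := hE n hn1
      refine ⟨by omega, this.2.1, this.2.2.trans (le_of_eq (by ring))⟩)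
    have h1 : ((E.filter fun n => n ≤ 2 * Z).card : ℝ) ≤
        (m : ℝ) ^ 2 / Z ^ 2 * ((2 * Z : ℕ) * KK ^ 3) := by
      calc ((E.filter fun n => n ≤ 2 * Z).card : ℝ)
          = ∑ n ∈ E.filter (fun n => n ≤ 2 * Z), (1 : ℝ) := by simp
        _ ≤ ∑ n ∈ E.filter (fun n => n ≤ 2 * Z),
              (m : ℝ) ^ 2 / Z ^ 2 * ((n : ℝ) / n.totient) ^ 2 := by
            refine Finset.sum_le_sum fun n hn => ?_
            obtain ⟨hn1, _⟩ := Finset.mem_filter.1 hn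
            obtain ⟨ha, hb, _⟩ := hE n hn1
            have hφ : (0 : ℝ) < n.totient := by
              exact_mod_cast Nat.totient_pos.2 (by omega : 0 < n)
            have hb' : (n.totient : ℝ) ≤ m := by exact_mod_cast hb
            have ha' : (Z : ℝ) ≤ n := by exact_mod_cast ha.le
            rw [← div_pow, ← mul_pow]
            refine one_le_pow₀ ?_
            rw [div_mul_div_comm, le_div_iff₀ (by positivity), one_mul, mul_comm]
            gcongr
        _ ≤ ∑ n ∈ Ioc 0 (2 * Z), (m : ℝ) ^ 2 / Z ^ 2 * ((n : ℝ) / n.totient) ^ 2 := by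
            refine Finset.sum_le_sum_of_subset_of_nonneg (fun n hn => ?_)
              fun _ _ _ => by positivity
            obtain ⟨hn1, hn2⟩ := Finset.mem_filter.1 hn
            exact Finset.mem_Ioc.2 ⟨by have := hE n hn1; omega, hn2⟩
        _ ≤ _ := by
            rw [← Finset.mul_sum]
            exact mul_le_mul_of_nonneg_left (moment_two _) (by positivity)
    rw [← hsplit]
    push_cast at h1 h2 ⊢
    have e1 : (m : ℝ) ^ 2 / Z ^ 2 * (2 * Z * KK ^ 3) = 2 * KK ^ 3 * m ^ 2 / Z := by
      field_simp
    have e2 : 4 * KK ^ 3 * (m : ℝ) ^ 2 / (2 * Z) = 2 * KK ^ 3 * m ^ 2 / Z := by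
      field_simp; ring
    rw [e1] at h1
    rw [e2] at h2
    calc _ ≤ 2 * KK ^ 3 * (m : ℝ) ^ 2 / Z + 2 * KK ^ 3 * m ^ 2 / Z := add_le_add h1 h2
      _ = _ := by ring

/-! ### The number of integers with small totient -/

/-- Upper bound for `#{n : φ(n) ≤ m}`: either `n ≤ l m U_y(n)`, or `n ≤ M m` and the primes `≥ y`
contribute more than `l` to `n / φ(n)`, or `n > M m`. -/
lemma card_upper (m M y : ℕ) (hm : 0 < m) (hM : 0 < M) (l : ℝ) (hl : 1 < l) (E : Finset ℕ)
    (hE : ∀ n ∈ E, 0 < n ∧ n.totient ≤ m) :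
    (E.card : ℝ) ≤ trunc y.primesBelow (l * m) +
      (M * m * (KK / KQ y.primesBelow - 1) / (l - 1) + 4 * KK ^ 3 * m / M) := by
  classical
  have hm' : (0 : ℝ) < m := by exact_mod_cast hm
  have hM' : (0 : ℝ) < M := by exact_mod_cast hM
  set Q := y.primesBelow with hQ
  set E1 := E.filter fun n : ℕ => (n : ℝ) ≤ l * m * U Q n
  set E' := E.filter fun n : ℕ => ¬ (n : ℝ) ≤ l * m * U Q n
  set E2 := E'.filter fun n => n ≤ M * m
  set E3 := E'.filter fun n => ¬ n ≤ M * m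
  have hs1 : E1.card + E'.card = E.card :=
    Finset.card_filter_add_card_filter_not (fun n : ℕ => (n : ℝ) ≤ l * m * U Q n)
  have hs2 : E2.card + E3.card = E'.card :=
    Finset.card_filter_add_card_filter_not (fun n => n ≤ M * m)
  have h1 : (E1.card : ℝ) ≤ trunc Q (l * m) := by
    exact_mod_cast card_le_trunc Q _ E1 fun n hn => by
      obtain ⟨ha, hb⟩ := Finset.mem_filter.1 hn
      exact ⟨(hE n ha).1, hb⟩
  have h3 : (E3.card : ℝ) ≤ 4 * KK ^ 3 * m / M := by
    have := tail_bound m (E3.sup id) (M * m) (by positivity) E3 (fun n hn => by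
      obtain ⟨ha, hb⟩ := Finset.mem_filter.1 hn
      obtain ⟨hc, _⟩ := Finset.mem_filter.1 ha
      refine ⟨by omega, (hE n hc).2, ?_⟩
      have h4 : n ≤ E3.sup id := Finset.le_sup (f := id) hn
      have h5 : n ≤ 2 ^ (E3.sup id) := h4.trans Nat.lt_two_pow_self.le
      exact h5.trans (Nat.le_mul_of_pos_right _ (by positivity)))
    refine this.trans (le_of_eq ?_)
    push_cast
    field_simp
  have hU : ∀ n : ℕ, 0 < U Q n := fun n => zero_lt_one.trans_le (one_le_U _ prime_pb n)
  have h2 : (E2.card : ℝ) ≤ M * m * (KK / KQ Q - 1) / (l - 1) := by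
    rw [le_div_iff₀ (by linarith)]
    calc (E2.card : ℝ) * (l - 1) = ∑ n ∈ E2, (l - 1) := by rw [Finset.sum_const, nsmul_eq_mul]
      _ ≤ ∑ n ∈ E2, ((n : ℝ) / n.totient / U Q n - 1) := by
          refine Finset.sum_le_sum fun n hn => ?_
          obtain ⟨ha, hb⟩ := Finset.mem_filter.1 hn
          obtain ⟨hc, hd⟩ := Finset.mem_filter.1 ha
          obtain ⟨h0, ht⟩ := hE n hc
          have hφ : (0 : ℝ) < n.totient := by exact_mod_cast Nat.totient_pos.2 h0
          have ht' : (n.totient : ℝ) ≤ m := by exact_mod_cast ht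
          refine sub_le_sub_right ?_ 1
          rw [le_div_iff₀ (hU n), le_div_iff₀ hφ]
          have := hU n
          calc l * U Q n * n.totient ≤ l * U Q n * m := by gcongr
            _ = l * m * U Q n := by ring
            _ ≤ n := (not_le.1 hd).le
      _ ≤ ∑ n ∈ Ioc 0 (M * m), ((n : ℝ) / n.totient / U Q n - 1) := by
          refine Finset.sum_le_sum_of_subset_of_nonneg (fun n hn => ?_) fun n hn _ => ?_
          · obtain ⟨ha, hb⟩ := Finset.mem_filter.1 hn
            exact Finset.mem_Ioc.2 ⟨(hE n (Finset.mem_filter.1 ha).1).1, hb⟩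
          · have h0 := (Finset.mem_Ioc.1 hn).1
            have hφ : (0 : ℝ) < n.totient := by exact_mod_cast Nat.totient_pos.2 h0
            rw [sub_nonneg, le_div_iff₀ (hU n), le_div_iff₀ hφ, one_mul, mul_comm]
            exact totient_mul_U_le n Q prime_pb h0
      _ ≤ _ := by
          rw [Finset.sum_sub_distrib]
          have := moment_one y (M * m)
          simp only [Finset.sum_const, Nat.card_Ioc, nsmul_eq_mul, mul_one, tsub_zero]
          push_cast at this ⊢
          rw [← hQ] at this
          linarith
  have : (E.card : ℝ) = E1.card + (E2.card + E3.card) := by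
    rw [← hs1, ← hs2]; push_cast; ring
  rw [this]
  exact add_le_add h1 (add_le_add h2 h3)

/-- The number of `b` with `φ(b) ≤ m` is asymptotic to `ζ(2)ζ(3)/ζ(6) · m`. -/
theorem tendsto_card (F : ℕ → Finset ℕ) (hF : ∀ m b, b ∈ F m ↔ 0 < b ∧ b.totient ≤ m) :
    Tendsto (fun m => ((F m).card : ℝ) / m) atTop (nhds KK) := by
  have hK := one_le_KK
  rw [tendsto_order]
  constructor
  · intro a ha
    obtain ⟨y, hy⟩ := (tendsto_KQ.eventually_const_lt ha).exists
    have h := tendsto_trunc y.primesBelow prime_pb 1 one_pos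
    rw [one_mul] at h
    filter_upwards [h.eventually_const_lt hy] with m hm
    refine hm.trans_le ?_
    refine div_le_div_of_nonneg_right ?_ (by positivity)
    rw [one_mul]
    exact_mod_cast trunc_le_card _ prime_pb _ (by positivity) _ fun n hn hle => by
      rw [hF]
      refine ⟨hn, ?_⟩
      have h1 := totient_mul_U_le n y.primesBelow prime_pb hn
      have h2 := one_le_U y.primesBelow prime_pb n
      have := le_of_mul_le_mul_right (h1.trans hle) (by linarith)
      exact_mod_cast this
  · intro a ha
    set η := (a - KK) / 4 with hη
    have hη0 : 0 < η := by rw [hη]; linarith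
    obtain ⟨M, hM⟩ := exists_nat_gt (4 * KK ^ 3 / η)
    have hMpos : (0 : ℝ) < M := lt_of_le_of_lt (by positivity) hM
    have hM3 : 4 * KK ^ 3 / M < η := by
      rw [div_lt_iff₀ hη0] at hM
      rw [div_lt_iff₀ hMpos]; linarith
    set l := 1 + η / KK with hl
    have hηK : 0 < η / KK := by positivity
    have hlim : Tendsto (fun y : ℕ => M * (KK / KQ y.primesBelow - 1) / (l - 1)) atTop
        (nhds (M * (KK / KK - 1) / (l - 1))) :=
      (((tendsto_const_nhds.div tendsto_KQ (by linarith)).sub_const 1).const_mul _).div_const _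
    rw [div_self (by linarith), sub_self, mul_zero, zero_div] at hlim
    obtain ⟨y, hy⟩ := (hlim.eventually_lt_const hη0).exists
    have h := (tendsto_trunc y.primesBelow prime_pb l (by linarith)).add_const
      (M * (KK / KQ y.primesBelow - 1) / (l - 1) + 4 * KK ^ 3 / M)
    have hlt : l * KQ y.primesBelow +
        (M * (KK / KQ y.primesBelow - 1) / (l - 1) + 4 * KK ^ 3 / M) < a := by
      have h1 : l * KQ y.primesBelow ≤ l * KK :=
        mul_le_mul_of_nonneg_left (KQ_le y) (by linarith)
      have h2 : l * KK = KK + η := by rw [hl]; field_simp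
      linarith
    filter_upwards [h.eventually_lt_const hlt, eventually_gt_atTop 0] with m hm hm0
    refine lt_of_le_of_lt ?_ hm
    have hm' : (0 : ℝ) < m := by exact_mod_cast hm0
    rw [div_le_iff₀ hm']
    refine (card_upper m M y hm0 (by exact_mod_cast hMpos) l (by linarith) (F m)
      fun n hn => (hF m n).1 hn).trans (le_of_eq ?_)
    have : l - 1 ≠ 0 := by linarith
    field_simp

lemma sum_totient_eq (F : ℕ → Finset ℕ) (hF : ∀ m b, b ∈ F m ↔ 0 < b ∧ b.totient ≤ m) (m : ℕ) :
    (∑ b ∈ F m, (b.totient : ℝ)) = m * (F m).card - ∑ j ∈ range m, ((F j).card : ℝ) := by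
  have h1 : ∀ b ∈ F m, (b.totient : ℝ) =
      ∑ j ∈ range m, ((1 : ℝ) - if b.totient ≤ j then 1 else 0) := by
    intro b hb
    have hle := ((hF m b).1 hb).2
    have : ∀ j, ((1 : ℝ) - if b.totient ≤ j then 1 else 0) = if j < b.totient then 1 else 0 := by
      intro j
      by_cases h : b.totient ≤ j
      · simp [h]
      · simp [h, not_le.1 h]
    simp_rw [this]
    rw [← Finset.sum_filter]
    have : (range m).filter (fun j => j < b.totient) = range b.totient := by
      ext j; simp only [Finset.mem_filter, Finset.mem_range]; omega
    rw [this]; simp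
  rw [Finset.sum_congr rfl h1, Finset.sum_comm]
  have h2 : ∀ j ∈ range m, ∑ b ∈ F m, ((1 : ℝ) - if b.totient ≤ j then 1 else 0) =
      (F m).card - (F j).card := by
    intro j hj
    rw [Finset.sum_sub_distrib, ← Finset.sum_filter]
    have : (F m).filter (fun b => b.totient ≤ j) = F j := by
      ext b
      have := Finset.mem_range.1 hj
      simp only [Finset.mem_filter, hF]; omega
    rw [this]; simp
  rw [Finset.sum_congr rfl h2, Finset.sum_sub_distrib]
  simp

lemma tendsto_sum_totient (F : ℕ → Finset ℕ)
    (hF : ∀ m b, b ∈ F m ↔ 0 < b ∧ b.totient ≤ m) :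
    Tendsto (fun m => (∑ b ∈ F m, (b.totient : ℝ)) / (m : ℝ) ^ 2) atTop (nhds (KK / 2)) := by
  have hA := tendsto_card F hF
  have hS : ∀ m : ℕ, ∑ i ∈ range m, (i : ℝ) = m * (m - 1) / 2 := by
    intro m
    induction m with
    | zero => simp
    | succ k ih => rw [Finset.sum_range_succ, ih]; push_cast; ring
  have hSlim : Tendsto (fun m : ℕ => (∑ i ∈ range m, (i : ℝ)) / (m : ℝ) ^ 2) atTop
      (nhds (1 / 2)) := by
    have h := ((tendsto_const_nhds (x := (1 : ℝ))).sub
      (tendsto_inv_atTop_nhds_zero_nat (𝕜 := ℝ))).div_const 2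
    rw [sub_zero] at h
    refine h.congr' ?_
    filter_upwards [eventually_gt_atTop 0] with m hm
    have : (m : ℝ) ≠ 0 := by exact_mod_cast hm.ne'
    rw [hS]; field_simp
  have hSinf : Tendsto (fun m : ℕ => ∑ i ∈ range m, (i : ℝ)) atTop atTop := by
    refine tendsto_atTop_mono' _ ?_ (tendsto_natCast_atTop_atTop (R := ℝ))
    filter_upwards [eventually_ge_atTop 3] with m hm
    have : (3 : ℝ) ≤ m := by exact_mod_cast hm
    rw [hS]; nlinarith
  have ho : (fun m : ℕ => ((F m).card : ℝ) - KK * m) =o[atTop] fun m : ℕ => (m : ℝ) := by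
    rw [Asymptotics.isLittleO_iff_tendsto' (by
      filter_upwards [eventually_gt_atTop 0] with m hm h0
      exact absurd h0 (by exact_mod_cast hm.ne'))]
    have := hA.sub_const KK
    rw [sub_self] at this
    refine this.congr' ?_
    filter_upwards [eventually_gt_atTop 0] with m hm
    have : (m : ℝ) ≠ 0 := by exact_mod_cast hm.ne'
    field_simp
  have hsum := (ho.sum_range (fun m => by positivity) hSinf).tendsto_div_nhds_zero
  have hlim := ((hA.sub (hSlim.const_mul KK)).sub (hsum.mul hSlim))
  have e : KK - KK * (1 / 2) - 0 * (1 / 2) = KK / 2 := by ring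
  rw [e] at hlim
  refine hlim.congr' ?_
  filter_upwards [hSinf.eventually_gt_atTop 0, eventually_gt_atTop 0] with m h1 hm
  have hm' : (m : ℝ) ≠ 0 := by exact_mod_cast hm.ne'
  rw [sum_totient_eq F hF, Finset.sum_sub_distrib, ← Finset.mul_sum]
  have := h1.ne'
  field_simp
  ring

/-! ### Weighted sums over the denominator set -/

/-- `h b = ∑_{p ∣ b} log p / (p - 1)`, the exponent of the minor arithmetic factor. -/
def h (b : ℕ) : ℝ := ∑ p ∈ b.primeFactors, Real.log p / ((p : ℝ) - 1)

lemma sum_log_le {b : ℕ} (hb : 0 < b) : ∑ p ∈ b.primeFactors, Real.log p ≤ Real.log b := by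
  rw [← Real.log_prod (fun p hp => by
    exact_mod_cast (Nat.prime_of_mem_primeFactors hp).ne_zero)]
  refine Real.log_le_log ?_ ?_
  · exact Finset.prod_pos fun p hp => by
      exact_mod_cast (Nat.prime_of_mem_primeFactors hp).pos
  · rw [← Nat.cast_prod]
    exact Nat.cast_le.2 (Nat.le_of_dvd hb (Nat.prod_primeFactors_dvd b))

lemma h_nonneg (b : ℕ) : 0 ≤ h b := by
  refine Finset.sum_nonneg fun p hp => ?_
  have := prime_sub_pos (Nat.prime_of_mem_primeFactors hp)
  exact div_nonneg (Real.log_nonneg (by linarith)) (by linarith)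

/-- Primes with `p - 1 ≤ T` contribute at most `1` each, the larger ones at most `log b / T` in total;
the choice `T = √(log b)` balances the two. -/
lemma h_le {b : ℕ} (hb : 0 < b) : h b ≤ 2 * √(Real.log b) := by
  rcases (Nat.succ_le_of_lt hb).eq_or_lt with h1 | h1
  · rw [← h1]; simp [h]
  have hb1 : (1 : ℝ) < b := by exact_mod_cast h1
  have hlog := Real.log_pos hb1
  set T := √(Real.log b) with hT
  have hT0 : 0 < T := Real.sqrt_pos.2 hlog
  have hTT : T * T = Real.log b := Real.mul_self_sqrt hlog.le
  have hsum := sum_log_le hb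
  have hbound : ∀ p ∈ b.primeFactors, Real.log p / ((p : ℝ) - 1) ≤
      (if (p : ℝ) - 1 ≤ T then 1 else 0) + Real.log p / T := by
    intro p hp
    have hp1 := prime_sub_pos (Nat.prime_of_mem_primeFactors hp)
    have hl : 0 ≤ Real.log p := Real.log_nonneg (by linarith)
    by_cases hpT : (p : ℝ) - 1 ≤ T
    · rw [if_pos hpT]
      have h1 : Real.log p / ((p : ℝ) - 1) ≤ 1 := by
        rw [div_le_one (by linarith)]
        exact Real.log_le_sub_one_of_pos (by linarith)
      have : 0 ≤ Real.log p / T := by positivity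
      linarith
    · rw [if_neg hpT, zero_add]
      exact div_le_div_of_nonneg_left hl hT0 (not_le.1 hpT).le
  have hcard : ((b.primeFactors.filter fun p : ℕ => (p : ℝ) - 1 ≤ T).card : ℝ) ≤ T := by
    have : (b.primeFactors.filter fun p : ℕ => (p : ℝ) - 1 ≤ T).card ≤ (Ioc 0 ⌊T⌋₊).card := by
      refine Finset.card_le_card_of_injOn (fun p => p - 1) (fun p hp => ?_) fun p hp q hq hpq => ?_
      · obtain ⟨ha, hb⟩ := Finset.mem_filter.1 hp
        have h2 := (Nat.prime_of_mem_primeFactors ha).two_le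
        refine Finset.mem_coe.2 (Finset.mem_Ioc.2 ⟨by simp only; omega, Nat.le_floor ?_⟩)
        rw [Nat.cast_sub (by omega)]
        simpa using hb
      · have h2 := (Nat.prime_of_mem_primeFactors (Finset.mem_filter.1 hp).1).two_le
        have h3 := (Nat.prime_of_mem_primeFactors (Finset.mem_filter.1 hq).1).two_le
        simp only at hpq
        omega
    rw [Nat.card_Ioc, tsub_zero] at this
    calc _ ≤ ((⌊T⌋₊ : ℕ) : ℝ) := by exact_mod_cast this
      _ ≤ T := Nat.floor_le hT0.le
  calc h b ≤ ∑ p ∈ b.primeFactors, ((if (p : ℝ) - 1 ≤ T then 1 else 0) + Real.log p / T) :=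
        Finset.sum_le_sum hbound
    _ = (b.primeFactors.filter fun p : ℕ => (p : ℝ) - 1 ≤ T).card +
          (∑ p ∈ b.primeFactors, Real.log p) / T := by
        rw [Finset.sum_add_distrib, ← Finset.sum_filter, Finset.sum_div]; simp
    _ ≤ T + Real.log b / T := by gcongr
    _ = 2 * T := by rw [← hTT]; field_simp; ring

lemma log_le_h {b : ℕ} (hb : 0 < b) : Real.log b ≤ Real.log b.totient + 2 * h b := by
  have hφ : (0 : ℝ) < b.totient := by exact_mod_cast Nat.totient_pos.2 hb
  have hp : ∀ p ∈ b.primeFactors, p.Prime := fun p hp => Nat.prime_of_mem_primeFactors hp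
  have hU := one_le_U _ hp b
  rw [← totient_mul_U b b.primeFactors hp hb (Finset.Subset.refl _),
    Real.log_mul hφ.ne' (by linarith)]
  refine add_le_add_right ?_ _
  rw [U_eq, Finset.filter_true_of_mem fun p hp => Nat.dvd_of_mem_primeFactors hp,
    Real.log_prod fun p hp' => by have := one_le_w (hp p hp'); linarith]
  unfold h
  rw [Finset.mul_sum]
  refine Finset.sum_le_sum fun p hp' => ?_
  have h1 := prime_sub_pos (hp p hp')
  have h2 : 0 < 1 / ((p : ℝ) - 1) := by positivity
  have h3 : Real.log (w p) ≤ 1 / ((p : ℝ) - 1) :=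
    (Real.log_le_sub_one_of_pos (by unfold w; linarith)).trans (by unfold w; linarith)
  refine h3.trans ?_
  rw [← mul_div_assoc]
  refine div_le_div_of_nonneg_right ?_ (by linarith)
  have h4 : Real.log 2 ≤ Real.log p := Real.log_le_log (by norm_num) (by linarith)
  have := Real.log_two_gt_d9
  linarith

lemma log_le_totient {b : ℕ} (hb : 0 < b) : Real.log b ≤ 2 * Real.log b.totient + 16 := by
  have h1 := log_le_h hb
  have h2 := h_le hb
  have h3 : 0 ≤ Real.log b := Real.log_nonneg (by exact_mod_cast hb)
  have h4 := Real.mul_self_sqrt h3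
  nlinarith [sq_nonneg (√(Real.log b) - 4)]

/-- The integers `b ≥ 1` with `φ(b) ≤ m`; the range bound is `b ≤ e ^ 16 φ(b) ^ 2`. -/
def fib (m : ℕ) : Finset ℕ :=
  (range (⌊Real.exp 16 * (m : ℝ) ^ 2⌋₊ + 1)).filter fun b => 0 < b ∧ b.totient ≤ m

lemma mem_fib (m b : ℕ) : b ∈ fib m ↔ 0 < b ∧ b.totient ≤ m := by
  unfold fib
  rw [Finset.mem_filter, Finset.mem_range]
  refine ⟨fun h => h.2, fun hb => ⟨Nat.lt_succ_of_le (Nat.le_floor ?_), hb⟩⟩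
  have hφ : (0 : ℝ) < b.totient := by exact_mod_cast Nat.totient_pos.2 hb.1
  have hb0 : (0 : ℝ) < b := by exact_mod_cast hb.1
  have hle : (b.totient : ℝ) ≤ m := by exact_mod_cast hb.2
  have h1 := log_le_totient hb.1
  calc (b : ℝ) = Real.exp (Real.log b) := (Real.exp_log hb0).symm
    _ ≤ Real.exp (16 + (Real.log b.totient + Real.log b.totient)) :=
        Real.exp_le_exp.2 (by linarith)
    _ = Real.exp 16 * (b.totient : ℝ) ^ 2 := by
        rw [Real.exp_add, Real.exp_add, Real.exp_log hφ, sq]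
    _ ≤ _ := by gcongr

/-- `|𝓕_B|` as a sum, for `m = ⌊B⌋`. -/
def sN (m : ℕ) : ℝ := ∑ b ∈ fib m, (b.totient : ℝ)

/-- `log A₁(B) / (2r+1)`, for `m = ⌊B⌋`. -/
def sL (m : ℕ) : ℝ := ∑ b ∈ fib m, (b.totient : ℝ) * Real.log b

/-- `log A₂(B) / (2r+1)`, for `m = ⌊B⌋`. -/
def sH (m : ℕ) : ℝ := ∑ b ∈ fib m, (b.totient : ℝ) * h b

lemma tendsto_sN : Tendsto (fun m => sN m / (m : ℝ) ^ 2) atTop (nhds (KK / 2)) :=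
  tendsto_sum_totient fib mem_fib

lemma tendsto_log_nat : Tendsto (fun m : ℕ => Real.log m) atTop atTop :=
  Real.tendsto_log_atTop.comp tendsto_natCast_atTop_atTop

lemma sH_nonneg (m : ℕ) : 0 ≤ sH m :=
  Finset.sum_nonneg fun b _ => mul_nonneg (by positivity) (h_nonneg b)

lemma log_totient_le {m b : ℕ} (hb : b ∈ fib m) : Real.log b.totient ≤ Real.log m := by
  obtain ⟨h0, h1⟩ := (mem_fib m b).1 hb
  refine Real.log_le_log ?_ (by exact_mod_cast h1)
  exact_mod_cast Nat.totient_pos.2 h0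

lemma sH_le (m : ℕ) : sH m ≤ sN m * (2 * √(2 * Real.log m + 16)) := by
  unfold sH sN
  rw [Finset.sum_mul]
  refine Finset.sum_le_sum fun b hb => ?_
  have h0 := ((mem_fib m b).1 hb).1
  refine mul_le_mul_of_nonneg_left ((h_le h0).trans ?_) (by positivity)
  have h1 := log_le_totient h0
  have h2 := log_totient_le hb
  gcongr
  linarith

lemma tendsto_sH : Tendsto (fun m => sH m / ((m : ℝ) ^ 2 * Real.log m)) atTop (nhds 0) := by
  have h1 : Tendsto (fun m : ℕ => 2 * √(2 / Real.log m + 16 / Real.log m ^ 2)) atTop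
      (nhds (2 * √(0 + 0))) := by
    refine Tendsto.const_mul _ (Tendsto.sqrt ?_)
    exact (tendsto_log_nat.const_div_atTop 2).add
      (((tendsto_pow_atTop two_ne_zero).comp tendsto_log_nat).const_div_atTop 16)
  have h2 := tendsto_sN.mul h1
  rw [add_zero, Real.sqrt_zero, mul_zero, mul_zero] at h2
  refine squeeze_zero' (Eventually.of_forall fun m => ?_) ?_ h2
  · refine div_nonneg (sH_nonneg m) (mul_nonneg (by positivity) (Real.log_natCast_nonneg m))
  · filter_upwards [tendsto_log_nat.eventually_gt_atTop 0, eventually_gt_atTop 0] with m hL hm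
    have hm' : (0 : ℝ) < m := by exact_mod_cast hm
    have e : √(2 / Real.log m + 16 / Real.log m ^ 2) =
        √(2 * Real.log m + 16) / Real.log m := by
      rw [show 2 / Real.log m + 16 / Real.log m ^ 2 =
        (2 * Real.log m + 16) / Real.log m ^ 2 by field_simp, Real.sqrt_div' _ (by positivity),
        Real.sqrt_sq hL.le]
    rw [e, div_le_iff₀ (by positivity)]
    refine (sH_le m).trans (le_of_eq ?_)
    field_simp

/-- Weighting by `log b` instead of `log m` costs `O(m²)` from small `φ(b)`, by
`log (m / φ(b)) ≤ m / φ(b)`, and the minor term from `log (b / φ(b)) ≤ 2 h b`. -/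
lemma abs_sL_sub_le (m : ℕ) : |sL m - sN m * Real.log m| ≤ m * (fib m).card + 2 * sH m := by
  have hH := sH_nonneg m
  rw [abs_le]
  constructor
  · have : sN m * Real.log m - sL m ≤ m * (fib m).card := by
      unfold sN sL
      rw [Finset.sum_mul, ← Finset.sum_sub_distrib, mul_comm (m : ℝ), ← nsmul_eq_mul,
        ← Finset.sum_const]
      refine Finset.sum_le_sum fun b hb => ?_
      obtain ⟨h0, h1⟩ := (mem_fib m b).1 hb
      have hφ : (0 : ℝ) < b.totient := by exact_mod_cast Nat.totient_pos.2 h0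
      have hm : (0 : ℝ) < m := by exact_mod_cast (Nat.totient_pos.2 h0).trans_le h1
      have hle : Real.log b.totient ≤ Real.log b :=
        Real.log_le_log hφ (by exact_mod_cast Nat.totient_le b)
      have hd : Real.log m - Real.log b.totient ≤ m / b.totient := by
        rw [← Real.log_div hm.ne' hφ.ne']
        exact (Real.log_le_sub_one_of_pos (by positivity)).trans (by linarith)
      rw [← mul_sub]
      calc (b.totient : ℝ) * (Real.log m - Real.log b) ≤ b.totient * (m / b.totient) := by
            gcongr; linarith
        _ = m := by field_simp
    linarith
  · have : sL m - sN m * Real.log m ≤ 2 * sH m := by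
      unfold sN sL sH
      rw [Finset.sum_mul, ← Finset.sum_sub_distrib, Finset.mul_sum]
      refine Finset.sum_le_sum fun b hb => ?_
      have h1 := log_le_h ((mem_fib m b).1 hb).1
      have h2 := log_totient_le hb
      rw [← mul_sub, mul_left_comm]
      refine mul_le_mul_of_nonneg_left (by linarith) (by positivity)
    have : (0 : ℝ) ≤ m * (fib m).card := by positivity
    linarith

lemma tendsto_sL : Tendsto (fun m => sL m / ((m : ℝ) ^ 2 * Real.log m)) atTop
    (nhds (KK / 2)) := by
  have hA := (tendsto_card fib mem_fib).mul (tendsto_inv_atTop_zero.comp tendsto_log_nat)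
  have hB := hA.add (tendsto_sH.const_mul 2)
  rw [mul_zero, mul_zero, add_zero] at hB
  have hd : Tendsto (fun m => sL m / ((m : ℝ) ^ 2 * Real.log m) - sN m / (m : ℝ) ^ 2) atTop
      (nhds 0) := by
    refine squeeze_zero_norm' ?_ hB
    filter_upwards [tendsto_log_nat.eventually_gt_atTop 0, eventually_gt_atTop 0] with m hL hm
    have hm' : (0 : ℝ) < m := by exact_mod_cast hm
    have e : sL m / ((m : ℝ) ^ 2 * Real.log m) - sN m / (m : ℝ) ^ 2 =
        (sL m - sN m * Real.log m) / ((m : ℝ) ^ 2 * Real.log m) := by field_simp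
    rw [e, Real.norm_eq_abs, abs_div, abs_of_pos (show 0 < (m : ℝ) ^ 2 * Real.log m by positivity),
      div_le_iff₀ (by positivity)]
    refine (abs_sL_sub_le m).trans (le_of_eq ?_)
    simp only [Function.comp]
    field_simp
  have := hd.add tendsto_sN
  rw [zero_add] at this
  exact this.congr fun m => by ring

/-! ### The zero set and the arithmetic factors -/

lemma card_zeroSet (S : Finset ℕ) (hS : ∀ b ∈ S, 0 < b) :
    (zeroSet S).card = ∑ b ∈ S, b.totient := by
  have hden : ∀ b a : ℕ, 0 < b → Nat.Coprime a b → ((a : ℚ) / b).den = b := by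
    intro b a hb hab
    have := Rat.den_div_eq_of_coprime (a := (a : ℤ)) (b := (b : ℤ)) (by exact_mod_cast hb)
      (by simpa using hab)
    rw [Int.cast_natCast, Int.cast_natCast] at this
    exact Int.ofNat_inj.1 this
  unfold zeroSet
  rw [Finset.card_biUnion]
  · refine Finset.sum_congr rfl fun b hb => ?_
    have hb0 := hS b hb
    rw [Finset.card_image_of_injOn]
    · rw [← Nat.filter_coprime_Ico_eq_totient b 1]
      congr 1
      ext a
      simp only [Finset.mem_filter, Finset.mem_Icc, Finset.mem_Ico, Nat.coprime_comm]
      omega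
    · intro a _ a' _ haa
      have : (b : ℚ) ≠ 0 := by exact_mod_cast hb0.ne'
      have := (div_left_inj' this).1 haa
      exact_mod_cast this
  · intro b hb b' hb' hne
    refine Finset.disjoint_left.2 fun x hx hx' => hne ?_
    obtain ⟨a, ha, rfl⟩ := Finset.mem_image.1 hx
    obtain ⟨a', ha', he⟩ := Finset.mem_image.1 hx'
    rw [← hden b a (hS b hb) (Finset.mem_filter.1 ha).2,
      ← hden b' a' (hS b' hb') (Finset.mem_filter.1 ha').2, he]

lemma log_A1 (m : ℕ) (r : ℚ) : Real.log (A1 (fib m) r) = (2 * (r : ℝ) + 1) * sL m := by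
  unfold A1 sL
  have hb : ∀ b ∈ fib m, (0 : ℝ) < b := fun b hb => by exact_mod_cast ((mem_fib m b).1 hb).1
  rw [Real.log_prod fun b h => (Real.rpow_pos_of_pos (hb b h) _).ne', Finset.mul_sum]
  refine Finset.sum_congr rfl fun b h => ?_
  rw [Real.log_rpow (hb b h)]; ring

lemma log_A2 (m : ℕ) (r : ℚ) : Real.log (A2 (fib m) r) = (2 * (r : ℝ) + 1) * sH m := by
  unfold A2 sH h
  have hp : ∀ b : ℕ, ∀ p ∈ b.primeFactors, (0 : ℝ) < p := fun b p hp => by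
    exact_mod_cast (Nat.prime_of_mem_primeFactors hp).pos
  rw [Real.log_prod fun b _ => (Finset.prod_pos fun p h =>
    Real.rpow_pos_of_pos (hp b p h) _).ne', Finset.mul_sum]
  refine Finset.sum_congr rfl fun b _ => ?_
  rw [Real.log_prod fun p h => (Real.rpow_pos_of_pos (hp b p h) _).ne', Finset.mul_sum,
    Finset.mul_sum]
  refine Finset.sum_congr rfl fun p h => ?_
  rw [Real.log_rpow (hp b p h)]; ring

lemma A1_pos (m : ℕ) (r : ℚ) : 0 < A1 (fib m) r :=
  Finset.prod_pos fun b hb => Real.rpow_pos_of_pos (by exact_mod_cast ((mem_fib m b).1 hb).1) _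

lemma A2_pos (m : ℕ) (r : ℚ) : 0 < A2 (fib m) r :=
  Finset.prod_pos fun b _ => Finset.prod_pos fun p hp =>
    Real.rpow_pos_of_pos (by exact_mod_cast (Nat.prime_of_mem_primeFactors hp).pos) _

/-! ### Growth of `B` and location of the root -/

/-- The parameter `B(x) = c √x / √(log x)`. -/
def Bx (c x : ℝ) : ℝ := c * √x / √(Real.log x)

lemma tendsto_div_log : Tendsto (fun x : ℝ => x / Real.log x) atTop atTop := by
  have h1 : Tendsto (fun x : ℝ => Real.log x / x) atTop (nhdsWithin 0 (Set.Ioi 0)) := by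
    refine tendsto_nhdsWithin_iff.2 ⟨Real.isLittleO_log_id_atTop.tendsto_div_nhds_zero, ?_⟩
    filter_upwards [eventually_gt_atTop 1] with x hx
    exact div_pos (Real.log_pos hx) (by linarith)
  refine (h1.inv_tendsto_nhdsGT_zero).congr fun x => ?_
  simp

lemma Bx_sq {c x : ℝ} (hx : 1 < x) : Bx c x ^ 2 = c ^ 2 * (x / Real.log x) := by
  unfold Bx
  rw [div_pow, mul_pow, Real.sq_sqrt (by linarith), Real.sq_sqrt (Real.log_pos hx).le]
  ring

lemma tendsto_Bx {c : ℝ} (hc : 0 < c) : Tendsto (Bx c) atTop atTop := by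
  have h := (Real.tendsto_sqrt_atTop.comp tendsto_div_log).const_mul_atTop hc
  refine h.congr' ?_
  filter_upwards [eventually_gt_atTop 1] with x hx
  simp only [Function.comp, Bx]
  rw [Real.sqrt_div (by linarith)]
  ring

/-- `m² log m ∼ (c² / 2) x` for `m = ⌊B(x)⌋`. -/
lemma tendsto_scale {c : ℝ} (hc : 0 < c) :
    Tendsto (fun x : ℝ => (⌊Bx c x⌋₊ : ℝ) ^ 2 * Real.log ⌊Bx c x⌋₊ / (x + 1)) atTop
      (nhds (c ^ 2 / 2)) := by
  have hB := tendsto_Bx hc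
  have h1 : Tendsto (fun x => (⌊Bx c x⌋₊ : ℝ) / Bx c x) atTop (nhds 1) :=
    (tendsto_nat_floor_div_atTop (R := ℝ)).comp hB
  have hlog := Real.tendsto_log_atTop
  have hinv : Tendsto (fun x => (Real.log x)⁻¹) atTop (nhds 0) :=
    tendsto_inv_atTop_zero.comp hlog
  have h2 : Tendsto (fun x => Real.log (⌊Bx c x⌋₊ / Bx c x) * (Real.log x)⁻¹) atTop
      (nhds (Real.log 1 * 0)) := (h1.log one_ne_zero).mul hinv
  have h3 : Tendsto (fun x : ℝ => Real.log c * (Real.log x)⁻¹) atTop (nhds (Real.log c * 0)) :=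
    hinv.const_mul _
  have h4 : Tendsto (fun x : ℝ => Real.log (Real.log x) / Real.log x) atTop (nhds 0) :=
    (Real.isLittleO_log_id_atTop.tendsto_div_nhds_zero).comp hlog
  have h5 : Tendsto (fun x => Real.log ⌊Bx c x⌋₊ / Real.log x) atTop (nhds (1 / 2)) := by
    have := (h2.add h3).add ((h4.const_sub 1).div_const 2)
    have e : Real.log 1 * 0 + Real.log c * 0 + (1 - 0) / 2 = (1 / 2 : ℝ) := by norm_num
    rw [e] at this
    refine this.congr' ?_
    filter_upwards [hlog.eventually_gt_atTop 0, eventually_gt_atTop 1,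
      hB.eventually_gt_atTop 0, (tendsto_nat_floor_atTop.comp hB).eventually_gt_atTop 0]
      with x hL hx hBp hm
    have hm' : (⌊Bx c x⌋₊ : ℝ) ≠ 0 := by
      simp only [Function.comp] at hm
      exact_mod_cast hm.ne'
    have hlogB : Real.log (Bx c x) = Real.log c + (Real.log x - Real.log (Real.log x)) / 2 := by
      have hs1 : √x ≠ 0 := (Real.sqrt_pos.2 (by linarith)).ne'
      have hs2 : √(Real.log x) ≠ 0 := (Real.sqrt_pos.2 hL).ne'
      unfold Bx
      rw [Real.log_div (mul_ne_zero hc.ne' hs1) hs2, Real.log_mul hc.ne' hs1,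
        Real.log_sqrt (by linarith), Real.log_sqrt hL.le]
      ring
    rw [Real.log_div hm' hBp.ne', hlogB]
    field_simp
    ring
  have h6 : Tendsto (fun x : ℝ => x / (x + 1)) atTop (nhds 1) := by
    have h := (tendsto_inv_atTop_zero.comp (tendsto_atTop_add_const_right atTop (1 : ℝ)
      tendsto_id)).const_sub 1
    rw [sub_zero] at h
    refine h.congr' ?_
    filter_upwards [eventually_gt_atTop 0] with x hx
    simp only [Function.comp, id]
    field_simp
    ring
  have h7 := (((h1.pow 2).mul_const (c ^ 2)).mul h6).mul h5
  have e : 1 ^ 2 * c ^ 2 * 1 * (1 / 2) = c ^ 2 / 2 := by ring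
  rw [e] at h7
  refine h7.congr' ?_
  filter_upwards [hlog.eventually_gt_atTop 0, eventually_gt_atTop 1, hB.eventually_gt_atTop 0]
    with x hL hx hBp
  rw [div_pow, Bx_sq hx]
  have : x ≠ 0 := by linarith
  field_simp

/-- The root of `f` is small when `|𝓕_B|` is small compared to `s`. -/
lemma root_bound (S : Finset ℕ) (r : ℚ) (hr : 0 < r) (s : ℕ) (X : ℝ) (hX : 0 < X)
    (hf : ff S r s X = 1)
    (hd : (2 * (r : ℝ) + 1) * ((zeroSet S).card / ((s : ℝ) + 1)) ≤ 1 / 2) :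
    X ≤ 2 * ((2 * (r : ℝ) + 1) * ((zeroSet S).card / ((s : ℝ) + 1))) * ((r : ℝ) + 1) := by
  have hr' : (0 : ℝ) < r := by exact_mod_cast hr
  set N : ℝ := ((zeroSet S).card : ℝ) with hN
  have hN0 : 0 ≤ N := by positivity
  have hs : (0 : ℝ) < (s : ℝ) + 1 := by positivity
  have hp1 : 0 < (X + 2 * (r : ℝ) + 1) / X := by positivity
  have hp2 : 0 < (X + (r : ℝ)) / (X + r + 1) := by positivity
  have hlog : N * Real.log ((X + 2 * (r : ℝ) + 1) / X) +
      ((s : ℝ) + 1) * Real.log ((X + (r : ℝ)) / (X + r + 1)) = 0 := by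
    have := congrArg Real.log hf
    unfold ff at this
    rw [Real.log_mul (by positivity) (by positivity), Real.log_pow, Real.log_pow,
      Real.log_one] at this
    push_cast at this
    exact this
  have h1 : Real.log ((X + 2 * (r : ℝ) + 1) / X) ≤ (2 * r + 1) / X :=
    (Real.log_le_sub_one_of_pos hp1).trans (le_of_eq (by field_simp; ring))
  have h2 : Real.log ((X + (r : ℝ)) / (X + r + 1)) ≤ - (1 / (X + r + 1)) :=
    (Real.log_le_sub_one_of_pos hp2).trans (le_of_eq (by field_simp; ring))
  have h3 := mul_le_mul_of_nonneg_left h1 hN0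
  have h4 := mul_le_mul_of_nonneg_left h2 hs.le
  have h5 : ((s : ℝ) + 1) * (1 / (X + r + 1)) ≤ N * ((2 * r + 1) / X) := by linarith
  set δ := (2 * (r : ℝ) + 1) * (N / ((s : ℝ) + 1)) with hδ
  have h6 : X ≤ δ * (X + r + 1) := by
    rw [mul_one_div, ← mul_div_assoc, div_le_div_iff₀ (by positivity) hX] at h5
    rw [hδ, ← mul_div_assoc, div_mul_eq_mul_div, le_div_iff₀ hs]
    linarith
  have h7 : δ * X ≤ 1 / 2 * X := mul_le_mul_of_nonneg_right hd hX.le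
  nlinarith

lemma log_gg (m : ℕ) (r : ℚ) (hr : 0 < r) (s : ℕ) (X : ℝ) (hX : 0 < X) :
    0 < gg (fib m) r s X ∧ Real.log (gg (fib m) r s X) =
      (2 * (r : ℝ) + 1) * (sL m + sH m + sN m * (Real.log r.den + Real.log (X + 2 * r + 1))) +
      ((s : ℝ) + 1) * (r * Real.log (X + r) - (r + 1) * Real.log (X + r + 1)) := by
  have hr' : (0 : ℝ) < r := by exact_mod_cast hr
  have hN : ((zeroSet (fib m)).card : ℝ) = sN m := by
    rw [card_zeroSet _ fun b hb => ((mem_fib m b).1 hb).1]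
    unfold sN
    push_cast
    rfl
  have hd : (0 : ℝ) < r.den := by exact_mod_cast r.den_pos
  have ha : 0 < X + 2 * (r : ℝ) + 1 := by positivity
  have hb : 0 < X + (r : ℝ) := by positivity
  have hc : 0 < X + (r : ℝ) + 1 := by positivity
  have h1 := A1_pos m r
  have h2 := A2_pos m r
  have h3 := Real.rpow_pos_of_pos hd ((2 * (r : ℝ) + 1) * sN m)
  have h4 := Real.rpow_pos_of_pos ha ((2 * (r : ℝ) + 1) * sN m)
  have h5 := Real.rpow_pos_of_pos hb (r : ℝ)
  have h6 := Real.rpow_pos_of_pos hc ((r : ℝ) + 1)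
  unfold gg
  rw [hN]
  refine ⟨by positivity, ?_⟩
  rw [Real.log_mul (by positivity) (by positivity), Real.log_mul (by positivity) h4.ne',
    Real.log_mul (by positivity) h3.ne', Real.log_mul h1.ne' h2.ne', Real.log_pow,
    Real.log_div h5.ne' h6.ne', Real.log_rpow hd, Real.log_rpow ha, Real.log_rpow hb,
    Real.log_rpow hc, log_A1, log_A2]
  push_cast
  ring

end GGRoot

/-- Fix a positive rational `r` and `c > 0`, and for odd `s` set
`B(s) = c·s^{1/2}/(log s)^{1/2}` and let `x₀(s)` be the positive root of `f`.  Then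
`g(x₀)^{1/(s+1)} → exp(ζ(2)ζ(3)(2r+1)c²/(4ζ(6)))·r^r/(r+1)^{r+1}` as odd `s → ∞`. -/
theorem gg_root_limit (r : ℚ) (hr : 0 < r) (c : ℝ) (hc : 0 < c)
    (Psi : ℕ → Finset ℕ)
    (hPsi : ∀ s : ℕ, ∀ b : ℕ, b ∈ Psi s ↔
      0 < b ∧ (Nat.totient b : ℝ) ≤ c * Real.sqrt s / Real.sqrt (Real.log s))
    (x₀ : ℕ → ℝ)
    (hx₀ : ∀ᶠ s : ℕ in atTop ⊓ Filter.principal {s : ℕ | Odd s},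
      0 < x₀ s ∧ ff (Psi s) r s (x₀ s) = 1) :
    Tendsto (fun s : ℕ => gg (Psi s) r s (x₀ s) ^ (((s : ℝ) + 1)⁻¹))
      (atTop ⊓ Filter.principal {s : ℕ | Odd s})
      (nhds (Real.exp (zetaR 2 * zetaR 3 * (2 * (r : ℝ) + 1) * c ^ 2 / (4 * zetaR 6)) *
        (r : ℝ) ^ (r : ℝ) / ((r : ℝ) + 1) ^ ((r : ℝ) + 1))) := by
  have hr' : (0 : ℝ) < r := by exact_mod_cast hr
  set M : ℕ → ℕ := fun s => ⌊GGRoot.Bx c s⌋₊ with hM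
  have hPsiM : ∀ s, Psi s = GGRoot.fib (M s) := by
    intro s
    ext b
    have hB : 0 ≤ GGRoot.Bx c s := by unfold GGRoot.Bx; positivity
    rw [hPsi, GGRoot.mem_fib, hM, Nat.le_floor_iff hB]
    rfl
  simp_rw [hPsiM] at hx₀ ⊢
  have hMtop : Tendsto M atTop atTop :=
    tendsto_nat_floor_atTop.comp ((GGRoot.tendsto_Bx hc).comp tendsto_natCast_atTop_atTop)
  have hscale : Tendsto (fun s : ℕ => (M s : ℝ) ^ 2 * Real.log (M s) / ((s : ℝ) + 1)) atTop
      (nhds (c ^ 2 / 2)) := (GGRoot.tendsto_scale hc).comp tendsto_natCast_atTop_atTop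
  have hlogM : ∀ᶠ s in atTop, 0 < Real.log (M s) ∧ 0 < (M s : ℝ) := by
    filter_upwards [hMtop.eventually (GGRoot.tendsto_log_nat.eventually_gt_atTop 0),
      hMtop.eventually_gt_atTop 0] with s h1 h2
    exact ⟨h1, by exact_mod_cast h2⟩
  have hL : Tendsto (fun s => GGRoot.sL (M s) / ((s : ℝ) + 1)) atTop
      (nhds (GGRoot.KK / 2 * (c ^ 2 / 2))) := by
    refine ((GGRoot.tendsto_sL.comp hMtop).mul hscale).congr' ?_
    filter_upwards [hlogM] with s hs
    simp only [Function.comp]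
    obtain ⟨h1, h2⟩ := hs
    field_simp
  have hH : Tendsto (fun s => GGRoot.sH (M s) / ((s : ℝ) + 1)) atTop (nhds 0) := by
    have := (GGRoot.tendsto_sH.comp hMtop).mul hscale
    rw [zero_mul] at this
    refine this.congr' ?_
    filter_upwards [hlogM] with s hs
    simp only [Function.comp]
    obtain ⟨h1, h2⟩ := hs
    field_simp
  have hN : Tendsto (fun s => GGRoot.sN (M s) / ((s : ℝ) + 1)) atTop (nhds 0) := by
    have := ((GGRoot.tendsto_sN.comp hMtop).mul hscale).mul
      (tendsto_inv_atTop_zero.comp (GGRoot.tendsto_log_nat.comp hMtop))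
    rw [mul_zero] at this
    refine this.congr' ?_
    filter_upwards [hlogM] with s hs
    simp only [Function.comp]
    obtain ⟨h1, h2⟩ := hs
    field_simp
  set l := atTop ⊓ Filter.principal {s : ℕ | Odd s} with hl
  have hle : l ≤ atTop := inf_le_left
  have hcard : ∀ s, ((zeroSet (GGRoot.fib (M s))).card : ℝ) = GGRoot.sN (M s) := by
    intro s
    rw [GGRoot.card_zeroSet _ fun b hb => ((GGRoot.mem_fib _ b).1 hb).1]
    unfold GGRoot.sN
    push_cast
    rfl
  have hX : Tendsto x₀ l (nhds 0) := by
    have hδ := (hN.const_mul (2 * (r : ℝ) + 1)).mono_left hle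
    have hup := (hδ.const_mul 2).mul_const ((r : ℝ) + 1)
    rw [mul_zero] at hδ
    rw [mul_zero, mul_zero, zero_mul] at hup
    refine squeeze_zero' (hx₀.mono fun s h => h.1.le) ?_ hup
    filter_upwards [hx₀, hδ.eventually_le_const (show (0 : ℝ) < 1 / 2 by norm_num)] with s hs hd
    rw [← hcard] at hd ⊢
    exact GGRoot.root_bound _ r hr s _ hs.1 hs.2 hd
  have hlim := ((((hL.add hH).mono_left hle).add ((hN.mono_left hle).mul
    ((((hX.add_const (2 * (r : ℝ))).add_const 1).log (by positivity)).const_add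
      (Real.log r.den)))).const_mul (2 * (r : ℝ) + 1)).add
    ((((hX.add_const (r : ℝ)).log (by positivity)).const_mul (r : ℝ)).sub
      ((((hX.add_const (r : ℝ)).add_const 1).log (by positivity)).const_mul ((r : ℝ) + 1)))
  have hexp := (Real.continuous_exp.tendsto _).comp hlim
  have e : Real.exp ((2 * (r : ℝ) + 1) * (GGRoot.KK / 2 * (c ^ 2 / 2) + 0 +
      0 * (Real.log r.den + Real.log (0 + 2 * r + 1))) +
      (r * Real.log (0 + r) - (r + 1) * Real.log (0 + r + 1))) =
      Real.exp (zetaR 2 * zetaR 3 * (2 * (r : ℝ) + 1) * c ^ 2 / (4 * zetaR 6)) *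
        (r : ℝ) ^ (r : ℝ) / ((r : ℝ) + 1) ^ ((r : ℝ) + 1) := by
    have h6 : zetaR 6 ≠ 0 := by have := GGRoot.one_le_zetaR 6 (by norm_num); linarith
    rw [zero_mul, add_zero, add_zero, zero_add, Real.exp_add, Real.exp_sub, mul_div_assoc,
      Real.rpow_def_of_pos hr', Real.rpow_def_of_pos (show (0 : ℝ) < r + 1 by positivity),
      mul_comm (r : ℝ) (Real.log r), mul_comm ((r : ℝ) + 1) (Real.log (r + 1))]
    congr 2
    unfold GGRoot.KK
    field_simp
    ring
  rw [e] at hexp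
  refine hexp.congr' ?_
  filter_upwards [hx₀] with s hs
  obtain ⟨hpos, hlog⟩ := GGRoot.log_gg (M s) r hr s (x₀ s) hs.1
  have hs1 : (s : ℝ) + 1 ≠ 0 := by positivity
  rw [Real.rpow_def_of_pos hpos, hlog]
  simp only [Function.comp]
  congr 1
  field_simp

end
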